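/- Let p, q, r be natural numbers with p ≥ 1 and q ≥ 1, and set n = p + q + r − 1. In the formal power series ring ℚ⟦t⟧, where (1 − t²) is invertible, one has ((∑_{i=0}^{n} t^{2i}) − t^{2(q+r)}(∑_{i=0}^{p−1} t^{2i}) − t^{2(p+r)}(∑_{i=0}^{q−1} t^{2i}))·(1−t²)^{−1} − t^{2p}·(∑_{i=0}^{r−1} t^{2i})·(1−t²)^{−1} = (1 − t^{2p})·(1 − t^{2(q+r)})·(1−t²)^{−2}. -/

import Mathlib

open PowerSeries Finset

/-- The Poincaré polynomial of `ℂP^{m-1}` in closed form. -/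
theorem sum_X_pow_two_mul_eq (m : ℕ) :
    ∑ i ∈ Finset.range m, (PowerSeries.X : PowerSeries ℚ) ^ (2 * i)
      = (1 - PowerSeries.X ^ (2 * m)) * (1 - PowerSeries.X ^ 2)⁻¹ := by
  rw [PowerSeries.eq_mul_inv_iff_mul_eq (by simp)]
  simp only [pow_mul]
  exact geom_sum_mul_neg _ m

theorem circle_quotient_intersection_poincare (p q r n : ℕ) (hp : 1 ≤ p) (hq : 1 ≤ q)
    (hn : n = p + q + r - 1) :
    ((∑ i ∈ Finset.range (n + 1), (PowerSeries.X : PowerSeries ℚ) ^ (2 * i))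
        - PowerSeries.X ^ (2 * (q + r))
            * ∑ i ∈ Finset.range p, (PowerSeries.X : PowerSeries ℚ) ^ (2 * i)
        - PowerSeries.X ^ (2 * (p + r))
            * ∑ i ∈ Finset.range q, (PowerSeries.X : PowerSeries ℚ) ^ (2 * i))
          * (1 - PowerSeries.X ^ 2)⁻¹
      - PowerSeries.X ^ (2 * p)
          * (∑ i ∈ Finset.range r, (PowerSeries.X : PowerSeries ℚ) ^ (2 * i))
          * (1 - PowerSeries.X ^ 2)⁻¹
    = (1 - PowerSeries.X ^ (2 * p)) * (1 - PowerSeries.X ^ (2 * (q + r)))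
        * ((1 - PowerSeries.X ^ 2)⁻¹) ^ 2 := by
  have hn' : n + 1 = p + q + r := by omega
  simp only [hn', sum_X_pow_two_mul_eq]
  ring
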